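/- Let 1 ≤ i ≤ n−1. The 2-periodic complex of free left B-modules ⋯ → B → B² → B → B² → B → B a_i → 0, in which the differentials alternate between the map B → B², z ↦ (z a_i, z c_{i+1} a_{i+1}), and the map B² → B, (w, x) ↦ w b_i c_i + x b_{i+1}, and in which the augmentation B → B a_i is z ↦ z a_i (the differential immediately preceding the augmentation being (w,x) ↦ w b_i c_i + x b_{i+1}), is exact; i.e., it is a free resolution of the left ideal B a_i of B. -/

import Mathlib

noncomputable section

inductive Gen (n : ℕ) : Type
  | a : Fin (n+1) → Gen n
  | b : Fin (n+1) → Gen n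
  | c : Fin (n+1) → Gen n

variable (K : Type) [Field K] (n : ℕ)

/-- The tensor algebra `T(V)` on the span of the generators, i.e. the free algebra. -/
abbrev FA := FreeAlgebra K (Gen n)

/-- `a_i`, with the convention that out-of-range indices give `0`. -/
def ga (i : ℤ) : FA K n :=
  if h : 0 ≤ i ∧ i ≤ (n : ℤ) then FreeAlgebra.ι K (Gen.a ⟨i.toNat, by omega⟩) else 0

def gb (i : ℤ) : FA K n :=
  if h : 0 ≤ i ∧ i ≤ (n : ℤ) then FreeAlgebra.ι K (Gen.b ⟨i.toNat, by omega⟩) else 0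

def gc (i : ℤ) : FA K n :=
  if h : 0 ≤ i ∧ i ≤ (n : ℤ) then FreeAlgebra.ι K (Gen.c ⟨i.toNat, by omega⟩) else 0

/-- The set `R` of defining relations. -/
def rels : Set (FA K n) :=
  { x | x = ga K n n * gb K n n * gc K n n ∨ x = gc K n 0 * ga K n 0 ∨
      ∃ i : ℕ, i < n ∧
        (x = ga K n i * gb K n i * gc K n i + gc K n (i+1) * ga K n (i+1) * gb K n (i+1) ∨
         x = gb K n (i+1) * gc K n (i+1) * ga K n (i+1) ∨
         x = gc K n i * gc K n (i+1) ∨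
         x = gb K n (i+1) * ga K n i) }

/-- The relation whose ring-quotient is `B = T(V)/⟨R⟩`. -/
def BRel (x y : FA K n) : Prop := x ∈ rels K n ∧ y = 0

/-- The algebra `B = T(V)/⟨R⟩`. -/
abbrev B := RingQuot (BRel K n)

/-- The quotient map `π_B : T(V) → B`. -/
def πB : FA K n →ₐ[K] B K n := RingQuot.mkAlgHom K (BRel K n)

/-- The image of `a_i` in `B` (zero for out-of-range indices). -/
def aB (i : ℤ) : B K n := πB K n (ga K n i)
def bB (i : ℤ) : B K n := πB K n (gb K n i)
def cB (i : ℤ) : B K n := πB K n (gc K n i)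

/-- The left annihilator of `x`, as a left ideal of `B`. -/
def lann (x : B K n) : Ideal (B K n) where
  carrier := {w | w * x = 0}
  add_mem' := by
    intro a b ha hb
    simp only [Set.mem_setOf_eq, add_mul] at *
    rw [ha, hb, add_zero]
  zero_mem' := by simp
  smul_mem' := by
    intro c w hw
    simp only [Set.mem_setOf_eq, smul_eq_mul, mul_assoc] at *
    rw [hw, mul_zero]

end

/-!
Every relation is read as a rewriting rule with leading terms `aₙbₙcₙ`, `c₀a₀`, `aᵢbᵢcᵢ`, `bᵢcᵢaᵢ`,
`cᵢcᵢ₊₁`, `bᵢ₊₁aᵢ`. These rules are confluent: right multiplication of words by letters, followed by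
rewriting at the right end, satisfies the relations of `B`, so `B` acts from the right on the free
module on all words. Acting on the empty word sends an element of `B` to a combination of words
that evaluates back to it. An equation in `B` can therefore be tested on coefficients of words:
if `z aᵢ = 0`, then each word of `z` ends in `bᵢcᵢ` or `bᵢ₊₁`; if `w bᵢcᵢ + x bᵢ₊₁ = 0`, then each
word of `w` ends in `aᵢ`, because only for those words does appending `bᵢcᵢ` trigger a rewriting;
and right multiplication by `bᵢ₊₁` is injective.
-/

noncomputable section

open Finsupp (single)

/-- The symbols `a_j`, `b_j`, `c_j` with an arbitrary integer index, so that index shifts need no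
range conditions; those out of range stand for `0` in `B`. -/
inductive Letter
  | a (j : ℤ)
  | b (j : ℤ)
  | c (j : ℤ)
  deriving DecidableEq

/-- The free module on words. A word is stored with its last letter at the head of the list, so
that appending a letter on the right is `List.cons`. -/
abbrev WordModule (R : Type*) [Semiring R] := List Letter →₀ R

namespace WordModule

section Operators

variable (R : Type*) [CommRing R] (n : ℕ) (j : ℤ)

variable {R} in
lemma apply_eq_of_forall_single {N : Type*} [AddCommMonoid N] [Module R N]
    (f g : WordModule R →ₗ[R] N) (h : ∀ u, f (single u 1) = g (single u 1))
    (m : WordModule R) : f m = g m :=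
  LinearMap.congr_fun (Finsupp.lhom_ext' fun u => LinearMap.ext_ring (h u)) m

/-- The word `u` ends in `b_{j+1}`, in `b_j c_j`, or (for `j = 0`) in `c_0`: the words which
`a_j` annihilates from the right. -/
def KilledByA (u : List Letter) : Prop :=
  [.b (j + 1)] <+: u ∨ [.c j, .b j] <+: u ∨ j = 0 ∧ [.c 0] <+: u

instance (u : List Letter) : Decidable (KilledByA j u) :=
  inferInstanceAs (Decidable (_ ∨ _ ∨ _))

/-- Right multiplication by `a_j` on words, followed by rewriting. -/
def mulA : WordModule R →ₗ[R] WordModule R :=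
  Finsupp.linearCombination R fun u => if KilledByA j u then 0 else single (.a j :: u) 1

/-- Right multiplication by `b_j` on words; no rewriting rule ends in `b_j`. -/
def mulB : WordModule R →ₗ[R] WordModule R :=
  Finsupp.lmapDomain R R (List.cons (.b j))

/-- The word `u c_j` after rewriting with `c_{j-1} c_j = 0` and
`a_j b_j c_j = - c_{j+1} a_{j+1} b_{j+1}`. Setting it to `0` for `n < j` turns `a_n b_n c_n = 0`
into an instance of the latter rule. -/
def wordMulC (j : ℤ) (u : List Letter) : WordModule R :=
  if n < j then 0 else
  match u with
  | .c k :: v => if k = j - 1 then 0 else single (.c j :: .c k :: v) 1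
  | .b k :: .a l :: v =>
      if k = j ∧ l = j then -mulB R (j + 1) (mulA R (j + 1) (wordMulC (j + 1) v))
      else single (.c j :: .b k :: .a l :: v) 1
  | u => single (.c j :: u) 1

/-- Right multiplication by `c_j` on words, followed by rewriting. -/
def mulC : WordModule R →ₗ[R] WordModule R :=
  Finsupp.linearCombination R (wordMulC R n j)

@[simp]
lemma mulA_single (u : List Letter) :
    mulA R j (single u 1) = if KilledByA j u then 0 else single (.a j :: u) 1 := by
  simp [mulA]

@[simp]
lemma mulB_single (u : List Letter) : mulB R j (single u 1) = single (.b j :: u) 1 := by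
  simp [mulB]

@[simp]
lemma mulC_single (u : List Letter) : mulC R n j (single u 1) = wordMulC R n j u := by
  simp [mulC]

variable {n j} in
lemma wordMulC_of_lt (h : n < j) (u : List Letter) : wordMulC R n j u = 0 := by
  rw [wordMulC.eq_def, if_pos h]

lemma wordMulC_succ_c (v : List Letter) : wordMulC R n (j + 1) (.c j :: v) = 0 := by
  simp [wordMulC]

lemma wordMulC_b_a (v : List Letter) : wordMulC R n j (.b j :: .a j :: v) =
    -mulB R (j + 1) (mulA R (j + 1) (wordMulC R n (j + 1) v)) := by
  rcases lt_or_ge (n : ℤ) j with h | h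
  · simp [wordMulC_of_lt R h, wordMulC_of_lt R (h.trans (lt_add_one j))]
  · simp [wordMulC, h.not_gt]

variable {n j} in
lemma wordMulC_of_irreducible (hj : j ≤ n) {u : List Letter} (hc : ∀ v, u ≠ .c (j - 1) :: v)
    (hba : ∀ v, u ≠ .b j :: .a j :: v) : wordMulC R n j u = single (.c j :: u) 1 := by
  rw [wordMulC.eq_def, if_neg hj.not_gt]
  split
  · rw [if_neg]
    rintro rfl
    exact hc _ rfl
  · rw [if_neg]
    rintro ⟨rfl, rfl⟩
    exact hba _ rfl
  · rfl

lemma wordMulC_cases (u : List Letter) :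
    n < j ∨ (∃ k v, j = k + 1 ∧ u = .c k :: v) ∨ (∃ v, u = .b j :: .a j :: v) ∨
      wordMulC R n j u = single (.c j :: u) 1 := by
  by_cases hj : (n : ℤ) < j
  · exact .inl hj
  by_cases hc : ∃ v, u = .c (j - 1) :: v
  · exact .inr (.inl ⟨j - 1, hc.imp fun v hv => ⟨(sub_add_cancel j 1).symm, hv⟩⟩)
  by_cases hba : ∃ v, u = .b j :: .a j :: v
  · exact .inr (.inr (.inl hba))
  · exact .inr (.inr (.inr (wordMulC_of_irreducible R (not_lt.1 hj) (not_exists.1 hc)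
      (not_exists.1 hba))))

variable {R}

lemma mulA_mulB_succ (m : WordModule R) : mulA R j (mulB R (j + 1) m) = 0 :=
  apply_eq_of_forall_single (mulA R j ∘ₗ mulB R (j + 1)) 0 (fun u => by simp [KilledByA]) m

lemma mulA_wordMulC_of_killedByA {u : List Letter} (hu : KilledByA j (.c j :: u)) :
    mulA R j (wordMulC R n j u) = 0 := by
  rcases wordMulC_cases R n j u with hj | ⟨k, v, rfl, rfl⟩ | ⟨v, rfl⟩ | h
  · rw [wordMulC_of_lt R hj, map_zero]
  · rw [wordMulC_succ_c, map_zero]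
  · rw [wordMulC_b_a, map_neg, mulA_mulB_succ, neg_zero]
  · rw [h, mulA_single, if_pos hu]

lemma mulA_zero_mulC_zero (m : WordModule R) : mulA R 0 (mulC R n 0 m) = 0 := by
  refine apply_eq_of_forall_single (mulA R 0 ∘ₗ mulC R n 0) 0 (fun u => ?_) m
  simpa using mulA_wordMulC_of_killedByA n 0 (by simp [KilledByA])

lemma mulA_mulC_mulB (m : WordModule R) : mulA R j (mulC R n j (mulB R j m)) = 0 := by
  refine apply_eq_of_forall_single (mulA R j ∘ₗ mulC R n j ∘ₗ mulB R j) 0 (fun u => ?_) m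
  simpa using mulA_wordMulC_of_killedByA n j (by simp [KilledByA])

variable {j} in
lemma mulA_wordMulC_succ_of_killedByA {u : List Letter} (hu : KilledByA j u) :
    mulA R (j + 1) (wordMulC R n (j + 1) u) = 0 := by
  rcases hu with ⟨v, rfl⟩ | ⟨v, rfl⟩ | ⟨rfl, v, rfl⟩
  · exact mulA_wordMulC_of_killedByA n (j + 1) (by simp [KilledByA])
  · simp only [List.cons_append, wordMulC_succ_c, map_zero]
  · simp only [List.cons_append, wordMulC_succ_c, map_zero]

lemma mulC_mulB_mulA_add (m : WordModule R) :
    mulC R n j (mulB R j (mulA R j m)) +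
      mulB R (j + 1) (mulA R (j + 1) (mulC R n (j + 1) m)) = 0 := by
  refine apply_eq_of_forall_single (mulC R n j ∘ₗ mulB R j ∘ₗ mulA R j +
    mulB R (j + 1) ∘ₗ mulA R (j + 1) ∘ₗ mulC R n (j + 1)) 0 (fun u => ?_) m
  by_cases hu : KilledByA j u
  · simp [hu, mulA_wordMulC_succ_of_killedByA n hu]
  · simp [hu, wordMulC_b_a]

lemma mulC_succ_wordMulC (j : ℤ) (u : List Letter) : mulC R n (j + 1) (wordMulC R n j u) = 0 := by
  rcases wordMulC_cases R n j u with hj | ⟨k, v, rfl, rfl⟩ | ⟨v, rfl⟩ | h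
  · rw [wordMulC_of_lt R hj, map_zero]
  · rw [wordMulC_succ_c, map_zero]
  · have habc := mulC_mulB_mulA_add n (j + 1) (wordMulC R n (j + 1) v)
    rw [mulC_succ_wordMulC (j + 1) v, map_zero, map_zero, add_zero] at habc
    rw [wordMulC_b_a, map_neg, habc, neg_zero]
  · rw [h, mulC_single, wordMulC_succ_c]
termination_by u.length

lemma mulC_succ_mulC (m : WordModule R) : mulC R n (j + 1) (mulC R n j m) = 0 :=
  apply_eq_of_forall_single (mulC R n (j + 1) ∘ₗ mulC R n j) 0
    (fun u => by simpa using mulC_succ_wordMulC n j u) m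

lemma mulC_mulB_mulA_top (m : WordModule R) : mulC R n n (mulB R n (mulA R n m)) = 0 := by
  have hC : mulC R n (n + 1) m = 0 :=
    apply_eq_of_forall_single _ 0 (fun u => by simp [wordMulC_of_lt R (lt_add_one (n : ℤ))]) m
  simpa [hC] using mulC_mulB_mulA_add n n m

lemma mulB_injective : Function.Injective (mulB R j) :=
  Finsupp.mapDomain_injective List.cons_injective

lemma mulB_apply_c (m : WordModule R) (k : ℤ) (u : List Letter) :
    mulB R j m (.c k :: u) = 0 :=
  Finsupp.mapDomain_of_notMem_range m _ (by simp)

variable {j}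

lemma mulA_apply_a {u : List Letter} (hu : ¬KilledByA j u) (m : WordModule R) :
    mulA R j m (.a j :: u) = m u := by
  refine apply_eq_of_forall_single
    (Finsupp.lapply (.a j :: u) ∘ₗ mulA R j) (Finsupp.lapply u) (fun v => ?_) m
  by_cases hv : KilledByA j v
  · have hvu : v ≠ u := by rintro rfl; exact hu hv
    simp [hv, hvu]
  · simp [hv, Finsupp.single_apply]

lemma mulC_mulB_apply_c_b (hj : j ≤ n) {u : List Letter} (hu : ∀ v, u ≠ .a j :: v)
    (m : WordModule R) : mulC R n j (mulB R j m) (.c j :: .b j :: u) = m u := by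
  refine apply_eq_of_forall_single
    (Finsupp.lapply (.c j :: .b j :: u) ∘ₗ mulC R n j ∘ₗ mulB R j) (Finsupp.lapply u)
    (fun v => ?_) m
  by_cases hv : ∃ v', v = .a j :: v'
  · obtain ⟨v', rfl⟩ := hv
    simp [wordMulC_b_a, mulB_apply_c, (hu v').symm]
  · have hirr : wordMulC R n j (.b j :: v) = single (.c j :: .b j :: v) 1 :=
      wordMulC_of_irreducible R hj (by simp) (by simpa using hv)
    simp [hirr, Finsupp.single_apply]

end Operators

end WordModule

section Relations

variable (K : Type) [Field K] (n : ℕ)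

lemma πB_eq_zero_of_mem_rels {x : FA K n} (hx : x ∈ rels K n) : πB K n x = 0 := by
  rw [← map_zero (πB K n)]
  exact RingQuot.mkAlgHom_rel K ⟨hx, rfl⟩

variable {n} {j : ℤ}

lemma aB_eq_zero_of_outOfRange (hj : ¬(0 ≤ j ∧ j ≤ n)) : aB K n j = 0 := by
  rw [aB, ga, dif_neg hj, map_zero]

lemma bB_eq_zero_of_outOfRange (hj : ¬(0 ≤ j ∧ j ≤ n)) : bB K n j = 0 := by
  rw [bB, gb, dif_neg hj, map_zero]

lemma cB_eq_zero_of_outOfRange (hj : ¬(0 ≤ j ∧ j ≤ n)) : cB K n j = 0 := by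
  rw [cB, gc, dif_neg hj, map_zero]

variable (n)

lemma cB_mul_aB_zero : cB K n 0 * aB K n 0 = 0 := by
  simpa [cB, aB] using πB_eq_zero_of_mem_rels K n (.inr (.inl rfl))

variable (j)

lemma bB_succ_mul_aB : bB K n (j + 1) * aB K n j = 0 := by
  by_cases hj : 0 ≤ j ∧ j < n
  · lift j to ℕ using hj.1
    simpa [bB, aB] using
      πB_eq_zero_of_mem_rels K n (.inr (.inr ⟨j, by simpa using hj, .inr (.inr (.inr rfl))⟩))
  · obtain h | h : ¬(0 ≤ j ∧ j ≤ n) ∨ ¬(0 ≤ j + 1 ∧ j + 1 ≤ n) := by omega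
    · rw [aB_eq_zero_of_outOfRange K h, mul_zero]
    · rw [bB_eq_zero_of_outOfRange K h, zero_mul]

lemma cB_mul_cB_succ : cB K n j * cB K n (j + 1) = 0 := by
  by_cases hj : 0 ≤ j ∧ j < n
  · lift j to ℕ using hj.1
    simpa [cB] using
      πB_eq_zero_of_mem_rels K n (.inr (.inr ⟨j, by simpa using hj, .inr (.inr (.inl rfl))⟩))
  · obtain h | h : ¬(0 ≤ j ∧ j ≤ n) ∨ ¬(0 ≤ j + 1 ∧ j + 1 ≤ n) := by omega
    · rw [cB_eq_zero_of_outOfRange K h, zero_mul]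
    · rw [cB_eq_zero_of_outOfRange K h, mul_zero]

lemma bB_mul_cB_mul_aB : bB K n j * cB K n j * aB K n j = 0 := by
  by_cases hj : 0 ≤ j ∧ j ≤ n
  · lift j to ℕ using hj.1
    rcases j with _ | j
    · simp [mul_assoc, cB_mul_aB_zero]
    · simpa [aB, bB, cB] using
        πB_eq_zero_of_mem_rels K n (.inr (.inr ⟨j, by lia, .inr (.inl rfl)⟩))
  · rw [aB_eq_zero_of_outOfRange K hj, mul_zero]

lemma aB_mul_bB_mul_cB_add :
    aB K n j * bB K n j * cB K n j + cB K n (j + 1) * aB K n (j + 1) * bB K n (j + 1) = 0 := by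
  obtain h | rfl | hj | rfl : (¬(0 ≤ j ∧ j ≤ n) ∧ ¬(0 ≤ j + 1 ∧ j + 1 ≤ n)) ∨ j = -1 ∨
      (0 ≤ j ∧ j < n) ∨ j = n := by omega
  · simp [aB_eq_zero_of_outOfRange K h.1, aB_eq_zero_of_outOfRange K h.2]
  · simp [aB_eq_zero_of_outOfRange K (n := n) (j := -1) (by simp), cB_mul_aB_zero]
  · lift j to ℕ using hj.1
    simpa [aB, bB, cB] using
      πB_eq_zero_of_mem_rels K n (.inr (.inr ⟨j, by simpa using hj, .inl rfl⟩))
  · rw [cB_eq_zero_of_outOfRange K (j := n + 1) (by simp), zero_mul, zero_mul, add_zero]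
    simpa [aB, bB, cB] using πB_eq_zero_of_mem_rels K n (.inl rfl)

end Relations

section Action

open WordModule

variable (K : Type) [Field K] (n : ℕ)

/-- The right action of the free algebra on the word module. -/
def actionFA : FA K n →ₐ[K] (Module.End K (WordModule K))ᵐᵒᵖ :=
  FreeAlgebra.lift K fun
    | .a j => .op (mulA K j)
    | .b j => .op (mulB K j)
    | .c j => .op (mulC K n j)

variable {n} {j : ℤ}

lemma actionFA_ga (hj : 0 ≤ j ∧ j ≤ n) : actionFA K n (ga K n j) = .op (mulA K j) := by
  simp [actionFA, ga, hj]

lemma actionFA_gb (hj : 0 ≤ j ∧ j ≤ n) : actionFA K n (gb K n j) = .op (mulB K j) := by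
  simp [actionFA, gb, hj]

lemma actionFA_gc (hj : 0 ≤ j ∧ j ≤ n) : actionFA K n (gc K n j) = .op (mulC K n j) := by
  simp [actionFA, gc, hj]

lemma actionFA_eq_zero_of_mem_rels {x : FA K n} (hx : x ∈ rels K n) :
    actionFA K n x = 0 := by
  refine MulOpposite.unop_injective (LinearMap.ext fun m => ?_)
  rcases hx with rfl | rfl | ⟨i, hi, hx⟩
  · have hn : (0 : ℤ) ≤ n ∧ (n : ℤ) ≤ n := by simp
    simpa [actionFA_ga K hn, actionFA_gb K hn, actionFA_gc K hn]
      using mulC_mulB_mulA_top n m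
  · have h0 : (0 : ℤ) ≤ 0 ∧ (0 : ℤ) ≤ n := by simp
    simpa [actionFA_ga K h0, actionFA_gc K h0] using mulA_zero_mulC_zero n m
  · have hi₀ : (0 : ℤ) ≤ i ∧ (i : ℤ) ≤ n := by lia
    have hi₁ : (0 : ℤ) ≤ i + 1 ∧ (i + 1 : ℤ) ≤ n := by lia
    rcases hx with rfl | rfl | rfl | rfl <;>
      simp only [map_add, map_mul, actionFA_ga K hi₀, actionFA_gb K hi₀, actionFA_gc K hi₀,
        actionFA_ga K hi₁, actionFA_gb K hi₁, actionFA_gc K hi₁]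
    · exact mulC_mulB_mulA_add n i m
    · exact mulA_mulC_mulB n (i + 1) m
    · exact mulC_succ_mulC n i m
    · exact mulA_mulB_succ i m

variable (n)

/-- The right action of `B` on the word module. -/
def actionB : B K n →ₐ[K] (Module.End K (WordModule K))ᵐᵒᵖ :=
  RingQuot.liftAlgHom K ⟨actionFA K n, fun x _ ⟨hx, hy⟩ => by
    rw [hy, map_zero, actionFA_eq_zero_of_mem_rels K hx]⟩

lemma actionB_πB (x : FA K n) : actionB K n (πB K n x) = actionFA K n x := by
  simp [actionB, πB]

/-- The coordinates of an element of `B` in words, obtained by acting on the empty word. -/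
def coordsB : B K n →ₗ[K] WordModule K :=
  LinearMap.applyₗ (single [] 1) ∘ₗ (MulOpposite.opLinearEquiv K).symm.toLinearMap ∘ₗ
    (actionB K n).toLinearMap

lemma coordsB_mul (x y : B K n) : coordsB K n (x * y) = (actionB K n y).unop (coordsB K n x) := by
  simp [coordsB]

variable {n}

lemma coordsB_mul_aB (hj : 0 ≤ j ∧ j ≤ n) (x : B K n) :
    coordsB K n (x * aB K n j) = mulA K j (coordsB K n x) := by
  rw [coordsB_mul, aB, actionB_πB, actionFA_ga K hj, MulOpposite.unop_op]

lemma coordsB_mul_bB (hj : 0 ≤ j ∧ j ≤ n) (x : B K n) :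
    coordsB K n (x * bB K n j) = mulB K j (coordsB K n x) := by
  rw [coordsB_mul, bB, actionB_πB, actionFA_gb K hj, MulOpposite.unop_op]

lemma coordsB_mul_cB (hj : 0 ≤ j ∧ j ≤ n) (x : B K n) :
    coordsB K n (x * cB K n j) = mulC K n j (coordsB K n x) := by
  rw [coordsB_mul, cB, actionB_πB, actionFA_gc K hj, MulOpposite.unop_op]

end Action

section Evaluation

open WordModule

variable (K : Type) [Field K] (n : ℕ) (j : ℤ)

/-- The image of a letter in `B`. -/
def letterB : Letter → B K n
  | .a j => aB K n j
  | .b j => bB K n j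
  | .c j => cB K n j

/-- The image in `B` of a word stored last letter first. -/
def wordB : List Letter → B K n
  | [] => 1
  | l :: u => wordB u * letterB K n l

/-- The linear map evaluating combinations of words in `B`. -/
def evalB : WordModule K →ₗ[K] B K n :=
  Finsupp.linearCombination K (wordB K n)

@[simp]
lemma evalB_single (u : List Letter) : evalB K n (single u 1) = wordB K n u := by
  simp [evalB]

variable {j} in
lemma wordB_mul_aB_of_killedByA {u : List Letter} (hu : KilledByA j u) :
    wordB K n u * aB K n j = 0 := by
  rcases hu with ⟨v, rfl⟩ | ⟨v, rfl⟩ | ⟨rfl, v, rfl⟩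
  · simp [wordB, letterB, mul_assoc, bB_succ_mul_aB]
  · have hbca := bB_mul_cB_mul_aB K n j
    rw [mul_assoc] at hbca
    simp [wordB, letterB, mul_assoc, hbca]
  · simp [wordB, letterB, mul_assoc, cB_mul_aB_zero]

lemma evalB_mulA (m : WordModule K) : evalB K n (mulA K j m) = evalB K n m * aB K n j := by
  refine apply_eq_of_forall_single (evalB K n ∘ₗ mulA K j)
    (LinearMap.mulRight K (aB K n j) ∘ₗ evalB K n) (fun u => ?_) m
  by_cases hu : KilledByA j u
  · simp [hu, wordB_mul_aB_of_killedByA K n hu]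
  · simp [hu, wordB, letterB]

lemma evalB_mulB (m : WordModule K) : evalB K n (mulB K j m) = evalB K n m * bB K n j :=
  apply_eq_of_forall_single (evalB K n ∘ₗ mulB K j)
    (LinearMap.mulRight K (bB K n j) ∘ₗ evalB K n) (fun u => by simp [wordB, letterB]) m

lemma evalB_wordMulC (j : ℤ) (u : List Letter) :
    evalB K n (wordMulC K n j u) = wordB K n u * cB K n j := by
  rcases wordMulC_cases K n j u with hj | ⟨k, v, rfl, rfl⟩ | ⟨v, rfl⟩ | h
  · rw [wordMulC_of_lt K hj, cB_eq_zero_of_outOfRange K (fun hj' => hj.not_ge hj'.2), map_zero,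
      mul_zero]
  · rw [wordMulC_succ_c, wordB, letterB, mul_assoc, cB_mul_cB_succ, map_zero, mul_zero]
  · have habc := eq_neg_of_add_eq_zero_left (aB_mul_bB_mul_cB_add K n j)
    calc evalB K n (wordMulC K n j (.b j :: .a j :: v))
        = -(evalB K n (wordMulC K n (j + 1) v) * aB K n (j + 1) * bB K n (j + 1)) := by
          rw [wordMulC_b_a, map_neg, evalB_mulB, evalB_mulA]
      _ = wordB K n v * -(cB K n (j + 1) * aB K n (j + 1) * bB K n (j + 1)) := by
          simp only [evalB_wordMulC (j + 1) v, mul_assoc]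
          exact (mul_neg (wordB K n v) _).symm
      _ = wordB K n (.b j :: .a j :: v) * cB K n j := by
          rw [← habc]
          simp only [wordB, letterB, mul_assoc]
  · rw [h, evalB_single, wordB, letterB]
termination_by u.length

lemma evalB_mulC (m : WordModule K) : evalB K n (mulC K n j m) = evalB K n m * cB K n j :=
  apply_eq_of_forall_single (evalB K n ∘ₗ mulC K n j)
    (LinearMap.mulRight K (cB K n j) ∘ₗ evalB K n) (fun u => by simp [evalB_wordMulC]) m

lemma evalB_actionB_ι (g : Gen n) (m : WordModule K) :
    evalB K n ((actionB K n (πB K n (FreeAlgebra.ι K g))).unop m) =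
      evalB K n m * πB K n (FreeAlgebra.ι K g) := by
  rw [actionB_πB, actionFA, FreeAlgebra.lift_ι_apply]
  rcases g with k | k | k
  · simpa [aB, ga, Nat.le_of_lt_succ k.isLt] using evalB_mulA K n k m
  · simpa [bB, gb, Nat.le_of_lt_succ k.isLt] using evalB_mulB K n k m
  · simpa [cB, gc, Nat.le_of_lt_succ k.isLt] using evalB_mulC K n k m

lemma evalB_actionB (y : B K n) (m : WordModule K) :
    evalB K n ((actionB K n y).unop m) = evalB K n m * y := by
  obtain ⟨y, rfl⟩ : ∃ y', πB K n y' = y := RingQuot.mkAlgHom_surjective K (BRel K n) y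
  induction y using FreeAlgebra.induction generalizing m with
  | grade0 r => simp [Algebra.algebraMap_eq_smul_one]
  | grade1 g => exact evalB_actionB_ι K n g m
  | mul x y hx hy => simp [hx, hy, mul_assoc]
  | add x y hx hy => simp [hx, hy, mul_add]

lemma evalB_coordsB (x : B K n) : evalB K n (coordsB K n x) = x := by
  simpa [coordsB, wordB] using evalB_actionB K n x (single [] 1)

lemma coordsB_injective : Function.Injective (coordsB K n) :=
  Function.LeftInverse.injective (evalB_coordsB K n)

variable {K n}

lemma mem_of_forall_wordB_mem {I : Ideal (B K n)} {x : B K n}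
    (h : ∀ u, coordsB K n x u ≠ 0 → wordB K n u ∈ I) : x ∈ I := by
  rw [← evalB_coordsB K n x, evalB, Finsupp.linearCombination_apply]
  exact Submodule.sum_mem _ fun u hu =>
    Submodule.smul_of_tower_mem I _ (h u (Finsupp.mem_support_iff.1 hu))

end Evaluation

section Exactness

open WordModule

variable {K : Type} [Field K] {n : ℕ} {i : ℤ}

lemma mem_lann {x y : B K n} : y ∈ lann K n x ↔ y * x = 0 := Iff.rfl

variable (K) in
lemma lann_aB (h0 : 0 < i) (hn : i ≤ n) :
    lann K n (aB K n i) = Ideal.span {bB K n i * cB K n i, bB K n (i + 1)} := by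
  refine le_antisymm (fun z hz => mem_of_forall_wordB_mem fun u hu => ?_) (Ideal.span_le.2 ?_)
  · have hzero : mulA K i (coordsB K n z) = 0 := by
      rw [← coordsB_mul_aB K ⟨h0.le, hn⟩, mem_lann.1 hz, map_zero]
    have hkilled : KilledByA i u := by
      by_contra hu'
      exact hu (by rw [← mulA_apply_a hu', hzero, Finsupp.zero_apply])
    rcases hkilled with ⟨v, rfl⟩ | ⟨v, rfl⟩ | ⟨rfl, -⟩
    · exact Ideal.mul_mem_left _ _ (Ideal.subset_span (.inr rfl))
    · rw [List.cons_append, List.cons_append, wordB, wordB, mul_assoc]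
      exact Ideal.mul_mem_left _ _ (Ideal.subset_span (.inl rfl))
    · exact absurd h0 (lt_irrefl 0)
  · rintro _ (rfl | rfl)
    exacts [bB_mul_cB_mul_aB K n i, bB_succ_mul_aB K n i]

variable (K n i) in
lemma span_le_lann_cB_mul_aB :
    Ideal.span {bB K n i * cB K n i, bB K n (i + 1)} ≤
      lann K n (cB K n (i + 1) * aB K n (i + 1)) := by
  rw [Ideal.span_le]
  rintro _ (rfl | rfl)
  · change bB K n i * cB K n i * (cB K n (i + 1) * aB K n (i + 1)) = 0
    rw [mul_assoc, ← mul_assoc (cB K n i), cB_mul_cB_succ, zero_mul, mul_zero]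
  · change bB K n (i + 1) * (cB K n (i + 1) * aB K n (i + 1)) = 0
    rw [← mul_assoc, bB_mul_cB_mul_aB]

lemma eq_zero_of_mul_bB_eq_zero (hi : 0 ≤ i ∧ i ≤ n) {x : B K n} (hx : x * bB K n i = 0) :
    x = 0 := by
  refine coordsB_injective K n (mulB_injective i ?_)
  rw [← coordsB_mul_bB K hi, hx, map_zero, map_zero]

lemma mem_span_aB_of_mul_bB_mul_cB_add_eq_zero (h0 : 0 ≤ i) (hn : i + 1 ≤ n) {w x : B K n}
    (h : w * (bB K n i * cB K n i) + x * bB K n (i + 1) = 0) : w ∈ Ideal.span {aB K n i} := by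
  have hi : 0 ≤ i ∧ i ≤ n := by lia
  have hcoords : mulC K n i (mulB K i (coordsB K n w)) + mulB K (i + 1) (coordsB K n x) = 0 := by
    rw [← coordsB_mul_bB K hi, ← coordsB_mul_cB K hi, ← coordsB_mul_bB K (by lia), ← map_add,
      mul_assoc, h, map_zero]
  refine mem_of_forall_wordB_mem fun u hu => ?_
  obtain ⟨v, rfl⟩ : ∃ v, u = .a i :: v := by
    by_contra hu'
    refine hu ?_
    rw [← mulC_mulB_apply_c_b n hi.2 (not_exists.1 hu'), eq_neg_of_add_eq_zero_left hcoords,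
      Finsupp.neg_apply, mulB_apply_c, neg_zero]
  exact Ideal.mul_mem_left _ _ (Ideal.mem_span_singleton_self _)

lemma mul_bB_mul_cB_add_mul_bB_eq_zero_iff (h0 : 0 ≤ i) (hn : i + 1 ≤ n) {w x : B K n} :
    w * (bB K n i * cB K n i) + x * bB K n (i + 1) = 0 ↔
      ∃ z, w = z * aB K n i ∧ x = z * (cB K n (i + 1) * aB K n (i + 1)) := by
  have boundary (z : B K n) : z * aB K n i * (bB K n i * cB K n i) +
      z * (cB K n (i + 1) * aB K n (i + 1)) * bB K n (i + 1) = 0 := by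
    rw [← mul_zero z, ← aB_mul_bB_mul_cB_add K n i]
    noncomm_ring
  constructor
  · intro h
    obtain ⟨z, rfl⟩ := Ideal.mem_span_singleton'.1
      (mem_span_aB_of_mul_bB_mul_cB_add_eq_zero h0 hn h)
    refine ⟨z, rfl, sub_eq_zero.1 (eq_zero_of_mul_bB_eq_zero (i := i + 1) (by lia) ?_)⟩
    rw [sub_mul, sub_eq_zero]
    exact add_left_cancel (h.trans (boundary z).symm)
  · rintro ⟨z, rfl, rfl⟩
    exact boundary z

end Exactness

end

/-- for `1 ≤ i ≤ n-1`, the 2-periodic complex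
`⋯ → B → B² → B → B² → B → B a_i → 0`, with differentials alternating between
`z ↦ (z a_i, z c_{i+1} a_{i+1})` and `(w, x) ↦ w b_i c_i + x b_{i+1}`, and augmentation
`z ↦ z a_i`, is exact, i.e. it is a free resolution of `B a_i`. -/
theorem stmt_7 (K : Type) [Field K] (n : ℕ) (i : ℕ) (h1 : 1 ≤ i) (h2 : i ≤ n - 1) :
    -- the augmentation `z ↦ z a_i` maps onto the left ideal `B a_i`
    (∀ y, y ∈ Ideal.span {aB K n i} ↔ ∃ z : B K n, y = z * aB K n i) ∧
    -- exactness at the augmentation spot: ker(z ↦ z a_i) = im((w,x) ↦ w b_i c_i + x b_{i+1})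
    (∀ z : B K n, z * aB K n i = 0 ↔
      ∃ w x : B K n, z = w * (bB K n i * cB K n i) + x * bB K n (i+1)) ∧
    -- exactness at the `B²` spots: ker((w,x) ↦ w b_i c_i + x b_{i+1}) = im(z ↦ (z a_i, z c_{i+1} a_{i+1}))
    (∀ w x : B K n,
      (w * (bB K n i * cB K n i) + x * bB K n (i+1) = 0) ↔
      (∃ z : B K n, w = z * aB K n i ∧ x = z * (cB K n (i+1) * aB K n (i+1)))) ∧
    -- exactness at the `B` spots: ker(z ↦ (z a_i, z c_{i+1} a_{i+1})) = im((w,x) ↦ w b_i c_i + x b_{i+1})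
    (∀ z : B K n,
      (z * aB K n i = 0 ∧ z * (cB K n (i+1) * aB K n (i+1)) = 0) ↔
      (∃ w x : B K n, z = w * (bB K n i * cB K n i) + x * bB K n (i+1))) := by
  have hlann := lann_aB K (n := n) (i := i) (by lia) (by lia)
  have mem_span {z : B K n} : z ∈ Ideal.span {bB K n i * cB K n i, bB K n (i + 1)} ↔
      ∃ w x, z = w * (bB K n i * cB K n i) + x * bB K n (i + 1) := by
    simp only [Ideal.mem_span_pair, eq_comm]
  refine ⟨fun y => ?_, fun z => ?_, fun w x => ?_, fun z => ?_⟩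
  · simp only [Ideal.mem_span_singleton', eq_comm]
  · rw [← mem_span, ← hlann, mem_lann]
  · exact mul_bB_mul_cB_add_mul_bB_eq_zero_iff (by lia) (by lia)
  · rw [← mem_span, ← mem_lann, ← mem_lann, hlann]
    exact and_iff_left_of_imp fun hz => span_le_lann_cB_mul_aB K n i hz
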